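/- (AKT lower bound, d = 2.) Let X_1,…,X_n, Y_1,…,Y_n be independent random variables with the uniform distribution dμ = dx/(2π)² on Q² = (−π,π]², and let μ_n = (1/n)Σ_{k=1}^n δ_{X_k}, ν_n = (1/n)Σ_{k=1}^n δ_{Y_k}. There exists an absolute constant c > 0 such that for every n ≥ 2, E( W̃₁(μ_n, ν_n) ) ≥ c·√(log n / n). -/

import Mathlib

open MeasureTheory ProbabilityTheory Real ENNReal

noncomputable section

/-- The square `Q² = (−π, π]²`. -/
def Qsquare : Set (Fin 2 → ℝ) := {x | ∀ i, x i ∈ Set.Ioc (-π) π}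

/-- The uniform distribution `dx/(2π)²` on `Q²`. -/
def uniformQsquare : Measure (Fin 2 → ℝ) :=
  (ENNReal.ofReal ((2 * π) ^ 2))⁻¹ • volume.restrict Qsquare

/-- The one-dimensional torus distance on `(−π,π]`. -/
def rhoCircle (s t : ℝ) : ℝ := min |s - t| (2 * π - |s - t|)

/-- The geodesic distance on the torus `Q² = (−π,π]²`. -/
def rhoTorus (x y : Fin 2 → ℝ) : ℝ :=
  Real.sqrt (∑ i, rhoCircle (x i) (y i) ^ 2)

/-- `γ` is a coupling of `μ` and `ν`. -/
def IsCoupling {α : Type*} [MeasurableSpace α]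
    (γ : Measure (α × α)) (μ ν : Measure α) : Prop :=
  γ.map Prod.fst = μ ∧ γ.map Prod.snd = ν

/-- Torus Kantorovich distance `W̃₁` on `Q²`. -/
def W1tilde (μ ν : Measure (Fin 2 → ℝ)) : ℝ≥0∞ :=
  ⨅ (γ : Measure ((Fin 2 → ℝ) × (Fin 2 → ℝ))) (_ : IsCoupling γ μ ν),
    ∫⁻ p, ENNReal.ofReal (rhoTorus p.1 p.2) ∂γ

/-- The empirical measure `(1/n) Σ_k δ_{X_k(ω)}`. -/
def empMeasure {n : ℕ} {Ω : Type*} [MeasurableSpace Ω]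
    (X : Fin n → Ω → (Fin 2 → ℝ)) (ω : Ω) : Measure (Fin 2 → ℝ) :=
  (n : ℝ≥0∞)⁻¹ • ∑ k, Measure.dirac (X k ω)

/-!
By Kantorovich duality it suffices to exhibit a Lipschitz function on which the two samples disagree
a lot. On each dyadic cell of side `2π / 2ᵏ` with `4ᵏ ≤ n` place a bump `2⁻ᵏ sin · sin` vanishing on
the boundary, with the sign of its own discrepancy between the samples. A bump then gains about
`√n / 4ᵏ` in expectation, hence every generation gains about `√n`, and the `log n` generations gain
`√n log n` in total.

The sum of all bumps can be too steep, so a bump is left out of the cells where the gradient of the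
coarser bumps exceeds `L`; the gradient of what remains is at most `L + 1`. The gradients of
different generations are almost orthogonal, since a fine bump has mean zero on a cell where the
coarse ones hardly vary. So the mean square of the gradient is `O(log n)`, and for `L ≍ √(log n)`
only a small proportion of the cells is lost. Dividing the gain by `n L` gives `√(log n / n)`.
-/

/-! ### Absolute moments of independent sums -/

section IndependentSums

lemma integrable_exp_ofReal_mul_I {α : Type*} [MeasurableSpace α] {μ : Measure α}
    [IsFiniteMeasure μ] {f : α → ℝ} (hf : AEMeasurable f μ) :
    Integrable (fun x ↦ Complex.exp (f x * Complex.I)) μ :=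
  .of_bound (by fun_prop) 1 (.of_forall fun x ↦ (Complex.norm_exp_ofReal_mul_I _).le)

lemma integral_cos_eq_re_integral_exp {α : Type*} [MeasurableSpace α] {μ : Measure α}
    [IsFiniteMeasure μ] {f : α → ℝ} (hf : AEMeasurable f μ) :
    ∫ x, cos (f x) ∂μ = (∫ x, Complex.exp (f x * Complex.I) ∂μ).re := by
  rw [← RCLike.re_to_complex, ← integral_re (integrable_exp_ofReal_mul_I hf)]
  simp only [RCLike.re_to_complex, Complex.exp_ofReal_mul_I_re]

lemma re_charFun_one (μ : Measure ℝ) [IsFiniteMeasure μ] :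
    (charFun μ 1).re = ∫ x, cos x ∂μ := by
  simp only [charFun_apply_real, Complex.ofReal_one, one_mul,
    integral_cos_eq_re_integral_exp aemeasurable_id']

lemma norm_charFun_one_eq_integral_cos_sub_arg (μ : Measure ℝ) [IsFiniteMeasure μ] :
    ‖charFun μ 1‖ = ∫ x, cos (x - (charFun μ 1).arg) ∂μ := by
  have hpolar : (‖charFun μ 1‖ : ℂ) =
      charFun μ 1 * Complex.exp (-((charFun μ 1).arg * Complex.I)) := by
    conv_rhs => enter [1]; rw [← Complex.norm_mul_exp_arg_mul_I (charFun μ 1)]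
    rw [mul_assoc, ← Complex.exp_add, add_neg_cancel, Complex.exp_zero, mul_one]
  rw [integral_cos_eq_re_integral_exp (by fun_prop), ← Complex.ofReal_re ‖_‖, hpolar,
    charFun_apply_real, ← integral_mul_const]
  congr 2 with x
  rw [← Complex.exp_add]
  push_cast
  ring_nf

lemma norm_charFun_one_le_one_sub_variance {μ : Measure ℝ} [IsProbabilityMeasure μ]
    (hμ : ∀ᵐ x ∂μ, |x| ≤ π / 2) :
    ‖charFun μ 1‖ ≤ 1 - 2 / π ^ 2 * Var[id; μ] := by
  set θ := (charFun μ 1).arg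
  have abs_θ_le : |θ| ≤ π / 2 := by
    rw [Complex.abs_arg_le_pi_div_two_iff, re_charFun_one]
    exact integral_nonneg_of_ae <| hμ.mono fun x hx ↦
      cos_nonneg_of_neg_pi_div_two_le_of_le (abs_le.1 hx).1 (abs_le.1 hx).2
  have abs_sub_le : ∀ᵐ x ∂μ, |x - θ| ≤ π := hμ.mono fun x hx ↦
    (abs_sub _ _).trans (by linarith)
  have hsq : Integrable (fun x ↦ (x - θ) ^ 2) μ := by
    refine .of_bound (by fun_prop) (π ^ 2) (abs_sub_le.mono fun x hx ↦ ?_)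
    rw [norm_pow, norm_eq_abs]
    exact pow_le_pow_left₀ (abs_nonneg _) hx 2
  have variance_le : Var[id; μ] ≤ ∫ x, (x - θ) ^ 2 ∂μ := by
    rw [← variance_sub_const (by fun_prop) θ]
    exact variance_le_expectation_sq (by fun_prop)
  calc ‖charFun μ 1‖ = ∫ x, cos (x - θ) ∂μ := norm_charFun_one_eq_integral_cos_sub_arg μ
    _ ≤ ∫ x, (1 - 2 / π ^ 2 * (x - θ) ^ 2) ∂μ :=
        integral_mono_ae (.of_bound (by fun_prop) 1 (.of_forall fun x ↦ abs_cos_le_one _))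
          ((integrable_const 1).sub (hsq.const_mul _))
          (abs_sub_le.mono fun x hx ↦ cos_le_one_sub_mul_cos_sq hx)
    _ = 1 - 2 / π ^ 2 * ∫ x, (x - θ) ^ 2 ∂μ := by
        rw [integral_sub (integrable_const 1) (hsq.const_mul _), integral_const_mul]
        simp
    _ ≤ 1 - 2 / π ^ 2 * Var[id; μ] := by gcongr

variable {Ω : Type*} [MeasurableSpace Ω] {P : Measure Ω} [IsProbabilityMeasure P]

lemma one_sub_re_charFun_map_one_le_integral_abs {S : Ω → ℝ} (hS : Integrable S P) :
    1 - (charFun (P.map S) 1).re ≤ ∫ ω, |S ω| ∂P := by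
  have hcos : Integrable (fun ω ↦ cos (S ω)) P :=
    .of_bound (by fun_prop) 1 (.of_forall fun ω ↦ abs_cos_le_one _)
  calc 1 - (charFun (P.map S) 1).re = ∫ ω, (1 - cos (S ω)) ∂P := by
        rw [integral_sub (integrable_const 1) hcos, re_charFun_one,
          integral_map (by fun_prop) (by fun_prop)]
        simp
    _ ≤ ∫ ω, |S ω| ∂P := by
        refine integral_mono ((integrable_const 1).sub hcos) hS.abs fun ω ↦ ?_
        simpa using (le_abs_self _).trans (abs_cos_sub_cos_le 0 (S ω))

lemma one_sub_exp_neg_variance_le_integral_abs_sum {ι : Type*} [Fintype ι] {ξ : ι → Ω → ℝ}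
    (hind : iIndepFun ξ P) (hm : ∀ i, AEMeasurable (ξ i) P)
    (hb : ∀ i, ∀ᵐ ω ∂P, |ξ i ω| ≤ π / 2) :
    1 - exp (-(2 / π ^ 2 * ∑ i, Var[ξ i; P])) ≤ ∫ ω, |∑ i, ξ i ω| ∂P := by
  have norm_factor_le (i : ι) :
      ‖charFun (P.map (ξ i)) 1‖ ≤ exp (-(2 / π ^ 2 * Var[ξ i; P])) := by
    have := Measure.isProbabilityMeasure_map (hm i) (μ := P)
    have hlaw : ∀ᵐ x ∂P.map (ξ i), |x| ≤ π / 2 :=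
      (ae_map_iff (hm i) (measurableSet_le (by fun_prop) (by fun_prop))).2 (hb i)
    have h := norm_charFun_one_le_one_sub_variance hlaw
    rw [variance_map aemeasurable_id (hm i)] at h
    exact h.trans (one_sub_le_exp_neg _)
  have re_charFun_le :
      (charFun (P.map fun ω ↦ ∑ i, ξ i ω) 1).re ≤ exp (-(2 / π ^ 2 * ∑ i, Var[ξ i; P])) := by
    rw [hind.charFun_map_fun_sum_eq_prod hm, Finset.mul_sum, ← Finset.sum_neg_distrib, exp_sum,
      Finset.prod_apply]
    refine (Complex.re_le_norm _).trans ?_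
    rw [norm_prod]
    exact Finset.prod_le_prod (fun i _ ↦ norm_nonneg _) fun i _ ↦ norm_factor_le i
  have hS : Integrable (fun ω ↦ ∑ i, ξ i ω) P :=
    integrable_finsetSum _ fun i _ ↦ .of_bound (hm i).aestronglyMeasurable _ (hb i)
  linarith [one_sub_re_charFun_map_one_le_integral_abs hS]

end IndependentSums

/-- The discrepancy `n (∫ ψ dμₙ - ∫ ψ dνₙ)` between two samples of size `n`, where `μₙ` and `νₙ` are
their empirical measures. It is not normalised by `n`, so as to be a sum of bounded terms. -/
def discrepancy {ι E : Type*} [Fintype ι] (ψ : E → ℝ) (x y : ι → E) : ℝ :=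
  ∑ i, (ψ (x i) - ψ (y i))

/-- The summands of `discrepancy ψ`, one for each point of the two samples. -/
def signedTerm {Ω E ι : Type*} (ψ : E → ℝ) (X Y : ι → Ω → E) : ι ⊕ ι → Ω → ℝ :=
  Sum.elim (fun i ω ↦ ψ (X i ω)) (fun i ω ↦ -ψ (Y i ω))

lemma sum_signedTerm {Ω E ι : Type*} [Fintype ι] (ψ : E → ℝ) (X Y : ι → Ω → E) (ω : Ω) :
    ∑ j, signedTerm ψ X Y j ω = discrepancy ψ (X · ω) (Y · ω) := by
  rw [discrepancy, Finset.sum_sub_distrib, sub_eq_add_neg, ← Finset.sum_neg_distrib,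
    Fintype.sum_sum_type]
  rfl

section Discrepancy

variable {Ω E ι : Type*} [MeasurableSpace Ω] [MeasurableSpace E] {P : Measure Ω} {μ : Measure E}
  {X Y : ι → Ω → E} {ψ : E → ℝ}

lemma iIndepFun_signedTerm (hind : iIndepFun (Sum.elim X Y) P) (hψ : Measurable ψ) :
    iIndepFun (signedTerm ψ X Y) P := by
  convert hind.comp (Sum.elim (fun _ ↦ ψ) fun _ ↦ -ψ) (Sum.rec (fun _ ↦ hψ) fun _ ↦ hψ.neg) with j
  cases j <;> rfl

lemma aemeasurable_signedTerm (hlaw : ∀ j, HasLaw (Sum.elim X Y j) μ P) (hψ : Measurable ψ)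
    (j : ι ⊕ ι) : AEMeasurable (signedTerm ψ X Y j) P := by
  have h := hψ.comp_aemeasurable (hlaw j).aemeasurable
  cases j
  exacts [h, h.neg]

lemma variance_signedTerm (hlaw : ∀ j, HasLaw (Sum.elim X Y j) μ P) (hψ : Measurable ψ)
    (j : ι ⊕ ι) : Var[signedTerm ψ X Y j; P] = Var[ψ; μ] := by
  have h : Var[ψ ∘ Sum.elim X Y j; P] = Var[ψ; μ] := by
    rw [← (hlaw j).map_eq, variance_map hψ.aemeasurable (hlaw j).aemeasurable]
  cases j
  · exact h
  · exact variance_fun_neg.trans h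

variable [Fintype ι]

lemma memLp_discrepancy {p : ℝ≥0∞} (hlaw : ∀ j, HasLaw (Sum.elim X Y j) μ P)
    (hψ : MemLp ψ p μ) : MemLp (fun ω ↦ discrepancy ψ (X · ω) (Y · ω)) p P := by
  have h (j : ι ⊕ ι) : MemLp (ψ ∘ Sum.elim X Y j) p P := by
    rw [← (hlaw j).map_eq] at hψ
    exact hψ.comp_of_map (hlaw j).aemeasurable
  exact memLp_finsetSum _ fun i _ ↦ (h (.inl i)).sub (h (.inr i))

lemma integral_discrepancy (hlaw : ∀ j, HasLaw (Sum.elim X Y j) μ P) (hψ : Integrable ψ μ) :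
    ∫ ω, discrepancy ψ (X · ω) (Y · ω) ∂P = 0 := by
  have hInt (j : ι ⊕ ι) : Integrable (fun ω ↦ ψ (Sum.elim X Y j ω)) P := by
    rw [← (hlaw j).map_eq] at hψ
    exact hψ.comp_aemeasurable (hlaw j).aemeasurable
  have hmean (j : ι ⊕ ι) : ∫ ω, ψ (Sum.elim X Y j ω) ∂P = ∫ x, ψ x ∂μ :=
    (hlaw j).integral_comp hψ.aestronglyMeasurable
  refine (integral_finsetSum _ fun i _ ↦ (hInt (.inl i)).sub (hInt (.inr i))).trans ?_
  refine Finset.sum_eq_zero fun i _ ↦ ?_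
  exact (integral_sub (hInt (.inl i)) (hInt (.inr i))).trans
    (sub_eq_zero.2 ((hmean (.inl i)).trans (hmean (.inr i)).symm))

lemma integral_discrepancy_sq [IsFiniteMeasure μ] (hind : iIndepFun (Sum.elim X Y) P)
    (hlaw : ∀ j, HasLaw (Sum.elim X Y j) μ P) (hψ : Measurable ψ) (hψ₂ : MemLp ψ 2 μ) :
    ∫ ω, discrepancy ψ (X · ω) (Y · ω) ^ 2 ∂P = 2 * Fintype.card ι * Var[ψ; μ] := by
  have hterm (j : ι ⊕ ι) : MemLp (signedTerm ψ X Y j) 2 P := by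
    have h : MemLp (ψ ∘ Sum.elim X Y j) 2 P := by
      rw [← (hlaw j).map_eq] at hψ₂
      exact hψ₂.comp_of_map (hlaw j).aemeasurable
    cases j
    exacts [h, h.neg]
  have hD := memLp_discrepancy hlaw hψ₂
  rw [← variance_of_integral_eq_zero hD.aemeasurable
    (integral_discrepancy hlaw (hψ₂.integrable one_le_two))]
  simp only [← sum_signedTerm, ← Finset.sum_apply]
  rw [IndepFun.variance_sum (fun j _ ↦ hterm j) fun i _ j _ hij ↦
    (iIndepFun_signedTerm hind hψ).indepFun hij]
  simp only [variance_signedTerm hlaw hψ, Finset.sum_const, Finset.card_univ, Fintype.card_sum,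
    nsmul_eq_mul]
  push_cast
  ring

/-- Scaling by `t` makes the summands small enough for their characteristic functions at `1`. -/
lemma le_integral_abs_discrepancy [IsProbabilityMeasure P] (hind : iIndepFun (Sum.elim X Y) P)
    (hlaw : ∀ j, HasLaw (Sum.elim X Y j) μ P) (hψ : Measurable ψ) {t : ℝ} (ht : 0 < t)
    (htψ : ∀ x, t * |ψ x| ≤ π / 2) :
    t⁻¹ * (1 - exp (-(4 / π ^ 2 * t ^ 2 * Fintype.card ι * Var[ψ; μ]))) ≤
      ∫ ω, |discrepancy ψ (X · ω) (Y · ω)| ∂P := by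
  have hscaled : ∀ ω, |∑ j, signedTerm (t • ψ) X Y j ω| = t * |discrepancy ψ (X · ω) (Y · ω)| :=
    fun ω ↦ by
      simp only [sum_signedTerm, discrepancy, Pi.smul_apply, smul_eq_mul, ← mul_sub,
        ← Finset.mul_sum, abs_mul, abs_of_pos ht]
  have h := one_sub_exp_neg_variance_le_integral_abs_sum
    (iIndepFun_signedTerm hind (hψ.const_smul t)) (aemeasurable_signedTerm hlaw (hψ.const_smul t))
    (fun j ↦ .of_forall fun ω ↦ by
      cases j <;> simpa [signedTerm, abs_mul, abs_of_pos ht] using htψ _)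
  simp only [variance_signedTerm hlaw (hψ.const_smul t), variance_smul, hscaled,
    integral_const_mul] at h
  have hvar : 2 / π ^ 2 * ∑ _j : ι ⊕ ι, t ^ 2 * Var[ψ; μ] =
      4 / π ^ 2 * t ^ 2 * Fintype.card ι * Var[ψ; μ] := by
    simp only [Finset.sum_const, Finset.card_univ, Fintype.card_sum, nsmul_eq_mul, Nat.cast_add]
    ring
  rwa [inv_mul_le_iff₀ ht, ← hvar]

end Discrepancy

/-! ### Kantorovich duality -/

lemma ofReal_integral_le_lintegral_ofReal {α : Type*} [MeasurableSpace α] {μ : Measure α}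
    {f : α → ℝ} (hf : Integrable f μ) :
    ENNReal.ofReal (∫ x, f x ∂μ) ≤ ∫⁻ x, ENNReal.ofReal (f x) ∂μ := by
  rw [integral_eq_lintegral_pos_part_sub_lintegral_neg_part hf]
  exact (ENNReal.ofReal_le_ofReal (sub_le_self _ ENNReal.toReal_nonneg)).trans
    ENNReal.ofReal_toReal_le

lemma IsCoupling.ofReal_integral_sub_le_lintegral {α : Type*} [MeasurableSpace α]
    {γ : Measure (α × α)} {μ ν : Measure α} (hγ : IsCoupling γ μ ν) {S : Set α}
    (hμS : ∀ᵐ x ∂μ, x ∈ S) (hνS : ∀ᵐ x ∂ν, x ∈ S) {F : α → ℝ} (hμF : Integrable F μ)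
    (hνF : Integrable F ν) {d : α → α → ℝ} (hF : ∀ x ∈ S, ∀ y ∈ S, F x - F y ≤ d x y) :
    ENNReal.ofReal (∫ x, F x ∂μ - ∫ x, F x ∂ν) ≤ ∫⁻ p, ENNReal.ofReal (d p.1 p.2) ∂γ := by
  obtain ⟨rfl, rfl⟩ := hγ
  have hfst : Integrable (fun p : α × α ↦ F p.1) γ := hμF.comp_measurable measurable_fst
  have hsnd : Integrable (fun p : α × α ↦ F p.2) γ := hνF.comp_measurable measurable_snd
  rw [integral_map measurable_fst.aemeasurable hμF.aestronglyMeasurable,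
    integral_map measurable_snd.aemeasurable hνF.aestronglyMeasurable, ← integral_sub hfst hsnd]
  refine (ofReal_integral_le_lintegral_ofReal (hfst.sub hsnd)).trans (lintegral_mono_ae ?_)
  filter_upwards [ae_of_ae_map measurable_fst.aemeasurable hμS,
    ae_of_ae_map measurable_snd.aemeasurable hνS] with p hp₁ hp₂
  exact ENNReal.ofReal_le_ofReal (hF _ hp₁ _ hp₂)

section EmpMeasure

variable {n : ℕ} {Ω : Type*} [MeasurableSpace Ω] {X Y : Fin n → Ω → Fin 2 → ℝ} {ω : Ω}
  {F : (Fin 2 → ℝ) → ℝ}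

lemma integrable_empMeasure (hn : n ≠ 0) : Integrable F (empMeasure X ω) :=
  (integrable_finsetSum_measure.2 fun _ _ ↦ integrable_dirac enorm_lt_top).smul_measure (by simpa)

lemma integral_empMeasure : ∫ x, F x ∂empMeasure X ω = (n : ℝ)⁻¹ * ∑ i, F (X i ω) := by
  rw [empMeasure, integral_smul_measure,
    integral_finsetSum_measure fun _ _ ↦ integrable_dirac enorm_lt_top]
  simp

lemma ae_empMeasure_mem {S : Set (Fin 2 → ℝ)} (hS : ∀ i, X i ω ∈ S) :
    ∀ᵐ x ∂empMeasure X ω, x ∈ S := by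
  refine Measure.ae_smul_measure (ae_finsetSum_measure_iff.2 fun i _ ↦ ?_) _
  rw [ae_dirac_eq]
  exact hS i

lemma ofReal_discrepancy_le_W1tilde (hn : n ≠ 0) (hX : ∀ i, X i ω ∈ Qsquare)
    (hY : ∀ i, Y i ω ∈ Qsquare) {M : ℝ} (hM : 0 < M)
    (hF : ∀ x ∈ Qsquare, ∀ y ∈ Qsquare, F x - F y ≤ M * rhoTorus x y) :
    ENNReal.ofReal ((n * M)⁻¹ * discrepancy F (X · ω) (Y · ω)) ≤
      W1tilde (empMeasure X ω) (empMeasure Y ω) := by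
  refine le_iInf₂ fun γ hγ ↦ ?_
  have hdual := hγ.ofReal_integral_sub_le_lintegral (ae_empMeasure_mem hX) (ae_empMeasure_mem hY)
    (F := fun x ↦ M⁻¹ * F x) (integrable_empMeasure hn) (integrable_empMeasure hn)
    (d := rhoTorus) fun x hx y hy ↦ by
      rw [← mul_sub, inv_mul_le_iff₀ hM]
      exact hF x hx y hy
  simp only [integral_empMeasure, ← Finset.mul_sum, ← mul_sub, ← Finset.sum_sub_distrib] at hdual
  rwa [mul_inv, mul_assoc]

end EmpMeasure

/-! ### Dyadic cells of the square -/

/-- Position of `t ∈ [-π, π)` in units of the `k`-th dyadic subdivision of `[-π, π)`: the dyadic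
intervals of generation `k` are those where the integer part of `dyadicPos k` is constant. -/
def dyadicPos (k : ℕ) (t : ℝ) : ℝ := 2 ^ k * ((t + π) / (2 * π))

/-- The inverse of `dyadicPos k`. -/
def dyadicPoint (k : ℕ) (s : ℝ) : ℝ := 2 * π * (s / 2 ^ k) - π

/-- The multi-index of the dyadic cell of generation `k` containing `x`. -/
def dyadicIndex (k : ℕ) (x : Fin 2 → ℝ) : Fin 2 → ℤ := fun i ↦ ⌊dyadicPos k (x i)⌋

/-- The dyadic cell of generation `k` and multi-index `a`, a half-open square. -/
def dyadicCell (k : ℕ) (a : Fin 2 → ℤ) : Set (Fin 2 → ℝ) := {x | dyadicIndex k x = a}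

/-- The multi-indices of the dyadic cells of generation `k` that subdivide `[-π, π)²`. -/
def dyadicGrid (k : ℕ) : Finset (Fin 2 → ℤ) := Fintype.piFinset fun _ ↦ Finset.Ico 0 (2 ^ k)

section Dyadic

variable {j k : ℕ} {s t : ℝ} {a : Fin 2 → ℤ} {x y : Fin 2 → ℝ}

lemma four_pow_eq_two_pow_sq (k : ℕ) : (4 : ℝ) ^ k = (2 ^ k) ^ 2 := by
  rw [pow_right_comm]
  norm_num

@[fun_prop]
lemma continuous_dyadicPos (k : ℕ) : Continuous (dyadicPos k) := by
  unfold dyadicPos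
  fun_prop

lemma hasDerivAt_dyadicPos (k : ℕ) (t : ℝ) : HasDerivAt (dyadicPos k) (2 ^ k / (2 * π)) t := by
  rw [← mul_one_div]
  exact (((hasDerivAt_id t).add_const π).div_const (2 * π)).const_mul (2 ^ k)

lemma dyadicPos_eq_mul (j k : ℕ) (t : ℝ) : dyadicPos j t = 2 ^ j / 2 ^ k * dyadicPos k t := by
  rw [dyadicPos, dyadicPos, ← mul_assoc, div_mul_cancel₀ _ (by positivity)]

lemma dyadicPos_neg_pi (k : ℕ) : dyadicPos k (-π) = 0 := by
  simp [dyadicPos]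

lemma dyadicPos_pi (k : ℕ) : dyadicPos k π = 2 ^ k := by
  rw [dyadicPos, ← two_mul, div_self (by positivity), mul_one]

lemma dyadicPos_strictMono (k : ℕ) : StrictMono (dyadicPos k) := fun s t hst ↦ by
  unfold dyadicPos
  gcongr

lemma dyadicPos_dyadicPoint (k : ℕ) (s : ℝ) : dyadicPos k (dyadicPoint k s) = s := by
  unfold dyadicPos dyadicPoint
  field_simp
  ring

lemma dyadicPoint_le_iff : dyadicPoint k s ≤ t ↔ s ≤ dyadicPos k t := by
  rw [← (dyadicPos_strictMono k).le_iff_le, dyadicPos_dyadicPoint]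

lemma lt_dyadicPoint_iff : t < dyadicPoint k s ↔ dyadicPos k t < s := by
  rw [← (dyadicPos_strictMono k).lt_iff_lt, dyadicPos_dyadicPoint]

lemma floor_dyadicPos_eq_iff {m : ℤ} :
    ⌊dyadicPos k t⌋ = m ↔ t ∈ Set.Ico (dyadicPoint k m) (dyadicPoint k (m + 1)) := by
  rw [Int.floor_eq_iff, Set.mem_Ico, dyadicPoint_le_iff, lt_dyadicPoint_iff]

lemma dyadicCell_eq_pi (k : ℕ) (a : Fin 2 → ℤ) : dyadicCell k a =
    Set.univ.pi fun i ↦ Set.Ico (dyadicPoint k (a i)) (dyadicPoint k (a i + 1)) := by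
  ext x
  simp only [dyadicCell, Set.mem_ofPred_eq, Set.mem_univ_pi, ← floor_dyadicPos_eq_iff, funext_iff,
    dyadicIndex]

@[fun_prop]
lemma measurable_dyadicIndex (k : ℕ) : Measurable (dyadicIndex k) :=
  measurable_pi_lambda _ fun i ↦ Int.measurable_floor.comp <|
    (continuous_dyadicPos k).measurable.comp (measurable_pi_apply i)

lemma measurableSet_dyadicCell (k : ℕ) (a : Fin 2 → ℤ) : MeasurableSet (dyadicCell k a) :=
  measurable_dyadicIndex k (measurableSet_singleton a)

lemma dyadicIndex_eq_of_le (hjk : j ≤ k) (hxy : dyadicIndex k x = dyadicIndex k y) :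
    dyadicIndex j x = dyadicIndex j y := by
  obtain ⟨m, rfl⟩ := Nat.exists_eq_add_of_le hjk
  have floor_eq (t : ℝ) : ⌊dyadicPos j t⌋ = ⌊dyadicPos (j + m) t⌋ / (2 ^ m : ℕ) := by
    rw [← Int.floor_div_natCast, dyadicPos_eq_mul j (j + m), pow_add, Nat.cast_pow, Nat.cast_ofNat]
    congr 1
    field_simp
  funext i
  rw [dyadicIndex, dyadicIndex, floor_eq, floor_eq]
  exact congrArg (· / _) (congrFun hxy i)

lemma abs_dyadicPos_sub_le (j : ℕ) (hxy : dyadicIndex k x = dyadicIndex k y) (i : Fin 2) :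
    |dyadicPos j (x i) - dyadicPos j (y i)| ≤ 2 ^ j / 2 ^ k := by
  rw [dyadicPos_eq_mul j k, dyadicPos_eq_mul j k, ← mul_sub, abs_mul,
    abs_of_nonneg (by positivity)]
  exact mul_le_of_le_one_right (by positivity)
    (Int.abs_sub_lt_one_of_floor_eq_floor (congrFun hxy i)).le

lemma card_dyadicGrid (k : ℕ) : (dyadicGrid k).card = 4 ^ k := by
  have toNat_two_pow : ((2 : ℤ) ^ k).toNat = 2 ^ k := by
    rw [← Int.toNat_natCast (2 ^ k), Nat.cast_pow, Nat.cast_ofNat]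
  rw [dyadicGrid, Fintype.card_piFinset_const, Int.card_Ico, sub_zero, toNat_two_pow,
    pow_right_comm]
  norm_num

lemma dyadicIndex_mem_dyadicGrid (k : ℕ) (hx : ∀ i, x i ∈ Set.Ico (-π) π) :
    dyadicIndex k x ∈ dyadicGrid k := by
  refine Fintype.mem_piFinset.2 fun i ↦ Finset.mem_Ico.2 ⟨Int.floor_nonneg.2 ?_, ?_⟩
  · rw [← dyadicPos_neg_pi k]
    exact (dyadicPos_strictMono k).monotone (hx i).1
  · rw [dyadicIndex, Int.floor_lt, Int.cast_pow, Int.cast_ofNat]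
    exact (dyadicPos_strictMono k (hx i).2).trans_eq (dyadicPos_pi k)

lemma neg_pi_le_dyadicPoint (ha : a ∈ dyadicGrid k) (i : Fin 2) : -π ≤ dyadicPoint k (a i) := by
  have hlo : (0 : ℝ) ≤ a i := mod_cast (Finset.mem_Ico.1 (Fintype.mem_piFinset.1 ha i)).1
  rwa [← (dyadicPos_strictMono k).le_iff_le, dyadicPos_dyadicPoint, dyadicPos_neg_pi]

lemma dyadicPoint_add_one_le_pi (ha : a ∈ dyadicGrid k) (i : Fin 2) :
    dyadicPoint k (a i + 1) ≤ π := by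
  have hhi : (a i + 1 : ℝ) ≤ 2 ^ k := mod_cast (Finset.mem_Ico.1 (Fintype.mem_piFinset.1 ha i)).2
  rwa [dyadicPoint_le_iff, dyadicPos_pi]

lemma Qsquare_eq_univ_pi : Qsquare = Set.univ.pi fun _ : Fin 2 ↦ Set.Ioc (-π) π := by
  ext x
  simp only [Qsquare, Set.mem_ofPred_eq, Set.mem_univ_pi]

lemma dyadicPoint_lt_dyadicPoint_add_one (k : ℕ) (s : ℝ) :
    dyadicPoint k s < dyadicPoint k (s + 1) := by
  rw [lt_dyadicPoint_iff, dyadicPos_dyadicPoint]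
  exact lt_add_one s

instance : IsProbabilityMeasure uniformQsquare := by
  constructor
  rw [uniformQsquare, Measure.smul_apply, Measure.restrict_apply_univ, Qsquare_eq_univ_pi,
    volume_pi_pi]
  simp only [Real.volume_Ioc, Finset.prod_const, Finset.card_univ, Fintype.card_fin, smul_eq_mul]
  rw [← ENNReal.ofReal_pow (by linarith [pi_pos]), sub_neg_eq_add, ← two_mul]
  exact ENNReal.inv_mul_cancel (by simp) (by simp)

lemma ae_uniformQsquare_mem_Ioo : ∀ᵐ x ∂uniformQsquare, ∀ i, x i ∈ Set.Ioo (-π) π := by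
  have hQ : Qsquare =ᵐ[volume] Set.univ.pi fun _ : Fin 2 ↦ Set.Ioo (-π) π := by
    rw [Qsquare_eq_univ_pi, volume_pi]
    exact Measure.univ_pi_Ioc_ae_eq_Icc.trans Measure.univ_pi_Ioo_ae_eq_Icc.symm
  rw [uniformQsquare, Measure.restrict_congr_set hQ]
  refine Measure.ae_smul_measure ?_ _
  filter_upwards [ae_restrict_mem (MeasurableSet.univ_pi fun _ ↦ measurableSet_Ioo)] with x hx
  exact fun i ↦ hx i trivial

lemma ae_uniformQsquare_dyadicIndex_mem_dyadicGrid :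
    ∀ᵐ x ∂uniformQsquare, ∀ k, dyadicIndex k x ∈ dyadicGrid k :=
  ae_uniformQsquare_mem_Ioo.mono fun _ hx k ↦
    dyadicIndex_mem_dyadicGrid k fun i ↦ Set.Ioo_subset_Ico_self (hx i)

lemma integral_eq_sum_setIntegral_dyadicCell (k : ℕ) {F : (Fin 2 → ℝ) → ℝ}
    (hF : Integrable F uniformQsquare) :
    ∫ x, F x ∂uniformQsquare =
      ∑ a ∈ dyadicGrid k, ∫ x in dyadicCell k a, F x ∂uniformQsquare := by
  have hdisj : Set.PairwiseDisjoint (dyadicGrid k) (dyadicCell k) := fun a _ b _ hab ↦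
    Set.disjoint_left.2 fun x hxa hxb ↦ hab (hxa.symm.trans hxb)
  rw [← integral_biUnion_finset _ (fun a _ ↦ measurableSet_dyadicCell k a) hdisj
    fun a _ ↦ hF.integrableOn, ← setIntegral_univ]
  refine (setIntegral_congr_set (Filter.eventuallyEq_univ.2 ?_)).symm
  filter_upwards [ae_uniformQsquare_dyadicIndex_mem_dyadicGrid] with x hx
  exact Set.mem_biUnion (hx k) rfl

lemma uniformQsquare_restrict_dyadicCell (ha : a ∈ dyadicGrid k) :
    uniformQsquare.restrict (dyadicCell k a) = (ENNReal.ofReal ((2 * π) ^ 2))⁻¹ •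
      Measure.pi fun i ↦
        volume.restrict (Set.Ioc (dyadicPoint k (a i)) (dyadicPoint k (a i + 1))) := by
  rw [uniformQsquare, Measure.restrict_smul, Qsquare_eq_univ_pi, dyadicCell_eq_pi, volume_pi,
    Measure.restrict_pi_pi, Measure.restrict_pi_pi]
  congr 2 with i : 1
  rw [Measure.restrict_congr_set Ico_ae_eq_Ioc, Measure.restrict_restrict measurableSet_Ioc,
    Set.inter_eq_left.2
      (Set.Ioc_subset_Ioc (neg_pi_le_dyadicPoint ha i) (dyadicPoint_add_one_le_pi ha i))]

lemma intervalIntegral_comp_dyadicPos (k : ℕ) (m : ℤ) {f : ℝ → ℝ} (hf : f.Periodic 1) :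
    ∫ t in dyadicPoint k m..dyadicPoint k (m + 1), f (dyadicPos k t) =
      2 * π / 2 ^ k * ∫ s in (0 : ℝ)..1, f s := by
  have hpos (t : ℝ) : dyadicPos k t = 2 ^ k / (2 * π) * t + 2 ^ k / 2 := by
    unfold dyadicPos
    field_simp
  have hscale : (2 : ℝ) ^ k / (2 * π) ≠ 0 := by positivity
  simp only [hpos]
  rw [intervalIntegral.integral_comp_mul_add _ hscale, ← hpos, ← hpos, dyadicPos_dyadicPoint,
    dyadicPos_dyadicPoint, hf.intervalIntegral_add_eq m 0, zero_add, inv_div, smul_eq_mul]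

lemma setIntegral_dyadicCell_prod (ha : a ∈ dyadicGrid k) {f : Fin 2 → ℝ → ℝ}
    (hf : ∀ i, (f i).Periodic 1) :
    ∫ x in dyadicCell k a, ∏ i, f i (dyadicPos k (x i)) ∂uniformQsquare =
      (4 ^ k)⁻¹ * ∏ i, ∫ s in (0 : ℝ)..1, f i s := by
  rw [uniformQsquare_restrict_dyadicCell ha, integral_smul_measure,
    integral_fintype_prod_eq_prod (𝕜 := ℝ) fun i t ↦ f i (dyadicPos k t)]
  simp only [← intervalIntegral.integral_of_le (dyadicPoint_lt_dyadicPoint_add_one k _).le,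
    intervalIntegral_comp_dyadicPos k _ (hf _), Finset.prod_mul_distrib, Finset.prod_const,
    Finset.card_univ, Fintype.card_fin]
  rw [ENNReal.toReal_inv, ENNReal.toReal_ofReal (by positivity), smul_eq_mul, ← mul_assoc,
    four_pow_eq_two_pow_sq, div_pow, ← mul_div_assoc, inv_mul_cancel₀ (by positivity), one_div]

lemma uniformQsquare_real_dyadicCell (ha : a ∈ dyadicGrid k) :
    uniformQsquare.real (dyadicCell k a) = (4 ^ k)⁻¹ := by
  simpa using setIntegral_dyadicCell_prod ha (f := fun _ _ ↦ 1) fun _ _ ↦ rfl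

end Dyadic

/-! ### Bumps -/

/-- The tensor product of sines of period one dyadic cell of generation `k`, with phases `φ`. For
`φ = 0` it vanishes on the boundary of each cell, and its `i`-th partial derivative is `2 ^ k` times
the wave with phases `Pi.single i (π / 2)`. -/
def cellWave (φ : Fin 2 → ℝ) (k : ℕ) (x : Fin 2 → ℝ) : ℝ :=
  ∏ j, sin (2 * π * dyadicPos k (x j) + φ j)

section CellWave

variable {j k : ℕ} {a : Fin 2 → ℤ} {x y : Fin 2 → ℝ} (φ : Fin 2 → ℝ)

@[fun_prop]
lemma continuous_cellWave (k : ℕ) : Continuous (cellWave φ k) := by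
  unfold cellWave
  fun_prop

lemma abs_cellWave_le_one (k : ℕ) (x : Fin 2 → ℝ) : |cellWave φ k x| ≤ 1 := by
  rw [cellWave, Finset.abs_prod]
  exact Finset.prod_le_one (fun _ _ ↦ abs_nonneg _) fun _ _ ↦ abs_sin_le_one _

lemma abs_cellWave_sub_le (j : ℕ) (hxy : dyadicIndex k x = dyadicIndex k y) :
    |cellWave φ j x - cellWave φ j y| ≤ 4 * π * (2 ^ j / 2 ^ k) := by
  have hsin (i : Fin 2) : |sin (2 * π * dyadicPos j (x i) + φ i) -
      sin (2 * π * dyadicPos j (y i) + φ i)| ≤ 2 * π * (2 ^ j / 2 ^ k) := by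
    refine (abs_sin_sub_sin_le _ _).trans ?_
    rw [add_sub_add_right_eq_sub, ← mul_sub, abs_mul, abs_of_pos two_pi_pos]
    gcongr
    exact abs_dyadicPos_sub_le j hxy i
  calc |cellWave φ j x - cellWave φ j y|
      = |(sin (2 * π * dyadicPos j (x 0) + φ 0) - sin (2 * π * dyadicPos j (y 0) + φ 0)) *
            sin (2 * π * dyadicPos j (x 1) + φ 1) +
          sin (2 * π * dyadicPos j (y 0) + φ 0) *
            (sin (2 * π * dyadicPos j (x 1) + φ 1) - sin (2 * π * dyadicPos j (y 1) + φ 1))| := by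
        simp only [cellWave, Fin.prod_univ_two]
        ring_nf
    _ ≤ 2 * π * (2 ^ j / 2 ^ k) * 1 + 1 * (2 * π * (2 ^ j / 2 ^ k)) := by
        refine (abs_add_le _ _).trans ?_
        rw [abs_mul, abs_mul]
        gcongr
        exacts [hsin 0, abs_sin_le_one _, abs_sin_le_one _, hsin 1]
    _ = 4 * π * (2 ^ j / 2 ^ k) := by ring

lemma integral_sin_two_pi_mul_add (c : ℝ) : ∫ s in (0 : ℝ)..1, sin (2 * π * s + c) = 0 := by
  rw [intervalIntegral.integral_comp_mul_add _ (by positivity)]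
  simp [add_comm _ c]

lemma integral_sin_two_pi_mul_add_sq (c : ℝ) :
    ∫ s in (0 : ℝ)..1, sin (2 * π * s + c) ^ 2 = 1 / 2 := by
  rw [intervalIntegral.integral_comp_mul_add (fun s ↦ sin s ^ 2) (by positivity), integral_sin_sq]
  simp only [mul_zero, add_zero, mul_one, add_comm _ c, sin_add_two_pi, cos_add_two_pi, smul_eq_mul]
  field_simp
  ring

lemma periodic_sin_two_pi_mul_add (c : ℝ) :
    Function.Periodic (fun s ↦ sin (2 * π * s + c)) 1 := fun s ↦ by
  simp only [mul_add, mul_one, add_right_comm _ _ c, sin_add_two_pi]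

lemma setIntegral_cellWave (ha : a ∈ dyadicGrid k) :
    ∫ x in dyadicCell k a, cellWave φ k x ∂uniformQsquare = 0 := by
  simp only [cellWave]
  rw [setIntegral_dyadicCell_prod ha fun i ↦ periodic_sin_two_pi_mul_add (φ i)]
  simp only [integral_sin_two_pi_mul_add, Fin.prod_univ_two, mul_zero]

lemma setIntegral_cellWave_sq (ha : a ∈ dyadicGrid k) :
    ∫ x in dyadicCell k a, cellWave φ k x ^ 2 ∂uniformQsquare = (4 ^ k)⁻¹ / 4 := by
  simp only [cellWave, ← Finset.prod_pow]
  rw [setIntegral_dyadicCell_prod (f := fun i s ↦ sin (2 * π * s + φ i) ^ 2) ha fun i ↦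
    (periodic_sin_two_pi_mul_add (φ i)).comp (· ^ 2)]
  simp only [integral_sin_two_pi_mul_add_sq, Fin.prod_univ_two]
  ring

lemma cellWave_zero_eq_zero {i : Fin 2} {m : ℤ} (hm : dyadicPos k (x i) = m) :
    cellWave 0 k x = 0 := by
  refine Finset.prod_eq_zero (Finset.mem_univ i) ?_
  rw [hm, Pi.zero_apply, add_zero, mul_comm (2 * π), ← mul_assoc, ← Int.cast_ofNat, ← Int.cast_mul]
  exact sin_int_mul_pi _

lemma cellWave_update (k : ℕ) (x : Fin 2 → ℝ) (i : Fin 2) (t : ℝ) :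
    cellWave φ k (Function.update x i t) = sin (2 * π * dyadicPos k t + φ i) *
      ∏ j ∈ Finset.univ.erase i, sin (2 * π * dyadicPos k (x j) + φ j) := by
  rw [cellWave, ← Finset.mul_prod_erase _ _ (Finset.mem_univ i), Function.update_self]
  congr 1
  exact Finset.prod_congr rfl fun j hj ↦ by rw [Function.update_of_ne (Finset.ne_of_mem_erase hj)]

lemma hasDerivAt_cellWave_update (k : ℕ) (x : Fin 2 → ℝ) (i : Fin 2) (t : ℝ) :
    HasDerivAt (fun t ↦ cellWave φ k (Function.update x i t))
      (2 ^ k * cellWave (φ + Pi.single i (π / 2)) k (Function.update x i t)) t := by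
  have hother : ∏ j ∈ Finset.univ.erase i,
        sin (2 * π * dyadicPos k (x j) + (φ + Pi.single i (π / 2) : Fin 2 → ℝ) j) =
      ∏ j ∈ Finset.univ.erase i, sin (2 * π * dyadicPos k (x j) + φ j) :=
    Finset.prod_congr rfl fun j hj ↦ by
      rw [Pi.add_apply, Pi.single_eq_of_ne (Finset.ne_of_mem_erase hj), add_zero]
  simp only [cellWave_update, hother]
  refine ((((hasDerivAt_dyadicPos k t).const_mul (2 * π)).add_const (φ i)).sin.mul_const
    _).congr_deriv ?_
  rw [Pi.add_apply, Pi.single_eq_same, ← add_assoc, sin_add_pi_div_two]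
  field_simp

end CellWave

/-! ### The stopped gradient -/

open Classical in
/-- The gradient of a sum of bumps `± 2⁻ᵏ cellWave 0 k`, with signs `σ k a` on the cells `a`, in
which a bump is left out when the gradient of the coarser ones exceeds `L` somewhere on its cell.
See `stoppedCoeff` and `potential`. -/
def stoppedGradient (L : ℝ) (σ : ℕ → (Fin 2 → ℤ) → ℝ) : ℕ → (Fin 2 → ℝ) → Fin 2 → ℝ
  | 0 => 0
  | k + 1 => fun x i ↦ stoppedGradient L σ k x i +
      (if ∃ y ∈ dyadicCell k (dyadicIndex k x), ∃ j, L < |stoppedGradient L σ k y j| then 0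
        else σ k (dyadicIndex k x)) * cellWave (Pi.single i (π / 2)) k x

/-- The cell of generation `k` and index `a` receives no bump. -/
def IsFrozen (L : ℝ) (σ : ℕ → (Fin 2 → ℤ) → ℝ) (k : ℕ) (a : Fin 2 → ℤ) : Prop :=
  ∃ y ∈ dyadicCell k a, ∃ j, L < |stoppedGradient L σ k y j|

open Classical in
/-- The sign of the bump on the cell of generation `k` and index `a`, or zero if it is frozen. -/
def stoppedCoeff (L : ℝ) (σ : ℕ → (Fin 2 → ℤ) → ℝ) (k : ℕ) (a : Fin 2 → ℤ) : ℝ :=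
  if IsFrozen L σ k a then 0 else σ k a

section StoppedGradient

variable {L : ℝ} {σ : ℕ → (Fin 2 → ℤ) → ℝ} {k : ℕ} {a : Fin 2 → ℤ} {x y : Fin 2 → ℝ}

lemma stoppedCoeff_of_isFrozen (h : IsFrozen L σ k a) : stoppedCoeff L σ k a = 0 := if_pos h

lemma stoppedCoeff_of_not_isFrozen (h : ¬IsFrozen L σ k a) : stoppedCoeff L σ k a = σ k a :=
  if_neg h

lemma stoppedGradient_succ (k : ℕ) (x : Fin 2 → ℝ) (i : Fin 2) :
    stoppedGradient L σ (k + 1) x i = stoppedGradient L σ k x i +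
      stoppedCoeff L σ k (dyadicIndex k x) * cellWave (Pi.single i (π / 2)) k x := rfl

lemma stoppedGradient_eq_sum (k : ℕ) (x : Fin 2 → ℝ) (i : Fin 2) :
    stoppedGradient L σ k x i = ∑ j ∈ Finset.range k,
      stoppedCoeff L σ j (dyadicIndex j x) * cellWave (Pi.single i (π / 2)) j x := by
  induction k with
  | zero => rfl
  | succ k ih => rw [stoppedGradient_succ, ih, Finset.sum_range_succ]

@[fun_prop]
lemma measurable_stoppedCoeff (k : ℕ) :
    Measurable fun x ↦ stoppedCoeff L σ k (dyadicIndex k x) :=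
  (measurable_of_countable (stoppedCoeff L σ k)).comp (measurable_dyadicIndex k)

@[fun_prop]
lemma measurable_stoppedGradient (k : ℕ) (i : Fin 2) :
    Measurable fun x ↦ stoppedGradient L σ k x i := by
  simp only [stoppedGradient_eq_sum]
  fun_prop

lemma abs_stoppedCoeff_le_one (hσ : ∀ k a, |σ k a| ≤ 1) (k : ℕ) (a : Fin 2 → ℤ) :
    |stoppedCoeff L σ k a| ≤ 1 := by
  unfold stoppedCoeff
  split_ifs
  exacts [abs_zero.trans_le zero_le_one, hσ k a]

lemma abs_stoppedCoeff_mul_cellWave_le_one (hσ : ∀ k a, |σ k a| ≤ 1) (k : ℕ) (a : Fin 2 → ℤ)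
    (φ x : Fin 2 → ℝ) : |stoppedCoeff L σ k a * cellWave φ k x| ≤ 1 := by
  rw [abs_mul]
  exact mul_le_one₀ (abs_stoppedCoeff_le_one hσ k a) (abs_nonneg _) (abs_cellWave_le_one φ k x)

lemma abs_stoppedGradient_le (hL : 0 ≤ L) (hσ : ∀ k a, |σ k a| ≤ 1) (k : ℕ) (x : Fin 2 → ℝ)
    (i : Fin 2) : |stoppedGradient L σ k x i| ≤ L + 1 := by
  induction k with
  | zero => simpa [stoppedGradient] using by linarith
  | succ k ih =>
    rw [stoppedGradient_succ]
    by_cases hfrozen : IsFrozen L σ k (dyadicIndex k x)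
    · rwa [stoppedCoeff_of_isFrozen hfrozen, zero_mul, add_zero]
    · have hle : |stoppedGradient L σ k x i| ≤ L :=
        not_lt.1 fun hlt ↦ hfrozen ⟨x, rfl, i, hlt⟩
      exact (abs_add_le _ _).trans
        (add_le_add hle (abs_stoppedCoeff_mul_cellWave_le_one hσ _ _ _ _))

lemma abs_stoppedGradient_sub_le (hσ : ∀ k a, |σ k a| ≤ 1)
    (hxy : dyadicIndex k x = dyadicIndex k y) (i : Fin 2) :
    |stoppedGradient L σ k x i - stoppedGradient L σ k y i| ≤ 4 * π := by
  have hterm : ∀ j ∈ Finset.range k,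
      |stoppedCoeff L σ j (dyadicIndex j x) * cellWave (Pi.single i (π / 2)) j x -
        stoppedCoeff L σ j (dyadicIndex j y) * cellWave (Pi.single i (π / 2)) j y| ≤
      4 * π * (2 ^ j / 2 ^ k) := fun j hj ↦ by
    rw [dyadicIndex_eq_of_le (Finset.mem_range.1 hj).le hxy, ← mul_sub, abs_mul]
    exact (mul_le_of_le_one_left (abs_nonneg _) (abs_stoppedCoeff_le_one hσ _ _)).trans
      (abs_cellWave_sub_le _ j hxy)
  have hgeom : ∑ j ∈ Finset.range k, (2 : ℝ) ^ j ≤ 2 ^ k := by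
    rw [geom_sum_eq (by norm_num)]
    norm_num
  rw [stoppedGradient_eq_sum, stoppedGradient_eq_sum, ← Finset.sum_sub_distrib]
  calc _ ≤ ∑ j ∈ Finset.range k, 4 * π * (2 ^ j / 2 ^ k) :=
        (Finset.abs_sum_le_sum_abs _ _).trans (Finset.sum_le_sum hterm)
    _ = 4 * π * ((∑ j ∈ Finset.range k, 2 ^ j) / 2 ^ k) := by rw [← Finset.mul_sum, Finset.sum_div]
    _ ≤ 4 * π := mul_le_of_le_one_right (by positivity) (div_le_one_of_le₀ hgeom (by positivity))

lemma memLp_stoppedGradient (hL : 0 ≤ L) (hσ : ∀ k a, |σ k a| ≤ 1) (k : ℕ) (i : Fin 2)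
    (p : ℝ≥0∞) : MemLp (fun x ↦ stoppedGradient L σ k x i) p uniformQsquare :=
  .of_bound (measurable_stoppedGradient k i).aestronglyMeasurable (L + 1)
    (.of_forall fun x ↦ abs_stoppedGradient_le hL hσ k x i)

/-- Since `g` has mean zero on `s`, only the oscillation of `f` contributes. -/
lemma abs_setIntegral_mul_le_of_oscillation {α : Type*} [MeasurableSpace α] {μ : Measure α}
    [IsFiniteMeasure μ] {s : Set α} {f g : α → ℝ} {C : ℝ} (hf : IntegrableOn f s μ)
    (hg : AEStronglyMeasurable g (μ.restrict s)) (hg₁ : ∀ x, |g x| ≤ 1)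
    (hg₀ : ∫ x in s, g x ∂μ = 0) (hosc : ∀ x ∈ s, ∀ y ∈ s, |f x - f y| ≤ C) :
    |∫ x in s, f x * g x ∂μ| ≤ C * μ.real s := by
  obtain rfl | ⟨y, hy⟩ := s.eq_empty_or_nonempty
  · simp
  have hgi : Integrable g (μ.restrict s) := .of_bound hg 1 (.of_forall hg₁)
  have hcentre : ∫ x in s, f x * g x ∂μ = ∫ x in s, (f x - f y) * g x ∂μ := by
    simp only [sub_mul]
    rw [integral_sub (hf.mul_bdd hg (.of_forall hg₁)) (hgi.const_mul _), integral_const_mul, hg₀,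
      mul_zero, sub_zero]
  rw [hcentre, ← Real.norm_eq_abs]
  refine norm_setIntegral_le_of_norm_le_const (measure_lt_top μ s) fun x hx ↦ ?_
  rw [norm_mul]
  exact (mul_le_of_le_one_right (norm_nonneg _) (hg₁ x)).trans (hosc x hx y hy)

lemma setIntegral_stoppedCoeff_mul_le (hL : 0 ≤ L) (hσ : ∀ k a, |σ k a| ≤ 1)
    (ha : a ∈ dyadicGrid k) (i : Fin 2) :
    ∫ x in dyadicCell k a, stoppedCoeff L σ k (dyadicIndex k x) *
        (stoppedGradient L σ k x i * cellWave (Pi.single i (π / 2)) k x) ∂uniformQsquare ≤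
      4 * π * (4 ^ k)⁻¹ := by
  have hcross : |∫ x in dyadicCell k a,
      stoppedGradient L σ k x i * cellWave (Pi.single i (π / 2)) k x ∂uniformQsquare| ≤
      4 * π * (4 ^ k)⁻¹ := by
    rw [← uniformQsquare_real_dyadicCell ha]
    exact abs_setIntegral_mul_le_of_oscillation
      ((memLp_stoppedGradient hL hσ k i 1).integrable le_rfl).integrableOn
      (continuous_cellWave _ k).aestronglyMeasurable (abs_cellWave_le_one _ k)
      (setIntegral_cellWave _ ha)
      fun x hx y hy ↦ abs_stoppedGradient_sub_le hσ (hx.trans hy.symm) i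
  have hconst : ∀ x ∈ dyadicCell k a, stoppedCoeff L σ k (dyadicIndex k x) *
        (stoppedGradient L σ k x i * cellWave (Pi.single i (π / 2)) k x) =
      stoppedCoeff L σ k a * (stoppedGradient L σ k x i * cellWave (Pi.single i (π / 2)) k x) :=
    fun x hx ↦ by rw [show dyadicIndex k x = a from hx]
  rw [setIntegral_congr_fun (measurableSet_dyadicCell k a) hconst, integral_const_mul]
  refine (le_abs_self _).trans ?_
  rw [abs_mul]
  exact (mul_le_of_le_one_left (abs_nonneg _) (abs_stoppedCoeff_le_one hσ _ _)).trans hcross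

lemma integrable_stoppedCoeff_mul (hL : 0 ≤ L) (hσ : ∀ k a, |σ k a| ≤ 1) (k : ℕ) (i : Fin 2) :
    Integrable (fun x ↦ stoppedCoeff L σ k (dyadicIndex k x) *
      (stoppedGradient L σ k x i * cellWave (Pi.single i (π / 2)) k x)) uniformQsquare :=
  (((memLp_stoppedGradient hL hσ k i 1).integrable le_rfl).mul_bdd
    (continuous_cellWave _ k).aestronglyMeasurable (.of_forall (abs_cellWave_le_one _ k))).bdd_mul
    (measurable_stoppedCoeff k).aestronglyMeasurable
    (.of_forall fun _ ↦ abs_stoppedCoeff_le_one hσ k _)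

lemma integral_stoppedCoeff_mul_le (hL : 0 ≤ L) (hσ : ∀ k a, |σ k a| ≤ 1) (k : ℕ) (i : Fin 2) :
    ∫ x, stoppedCoeff L σ k (dyadicIndex k x) *
        (stoppedGradient L σ k x i * cellWave (Pi.single i (π / 2)) k x) ∂uniformQsquare ≤
      4 * π := by
  rw [integral_eq_sum_setIntegral_dyadicCell k (integrable_stoppedCoeff_mul hL hσ k i)]
  refine (Finset.sum_le_card_nsmul _ _ _ fun a ha ↦
    setIntegral_stoppedCoeff_mul_le hL hσ ha i).trans_eq ?_
  rw [card_dyadicGrid, nsmul_eq_mul]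
  push_cast
  field_simp

lemma integral_stoppedGradient_sq_le (hL : 0 ≤ L) (hσ : ∀ k a, |σ k a| ≤ 1) (k : ℕ) (i : Fin 2) :
    ∫ x, stoppedGradient L σ k x i ^ 2 ∂uniformQsquare ≤ (8 * π + 1) * k := by
  induction k with
  | zero => simp [stoppedGradient]
  | succ k ih =>
    have hsq (k : ℕ) := (memLp_stoppedGradient hL hσ k i 2).integrable_sq
    have hcross := (integrable_stoppedCoeff_mul hL hσ k i).const_mul 2
    have hexpand (x : Fin 2 → ℝ) : stoppedGradient L σ (k + 1) x i ^ 2 ≤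
        stoppedGradient L σ k x i ^ 2 + 2 * (stoppedCoeff L σ k (dyadicIndex k x) *
          (stoppedGradient L σ k x i * cellWave (Pi.single i (π / 2)) k x)) + 1 := by
      have h := (sq_le_one_iff_abs_le_one _).2 (abs_stoppedCoeff_mul_cellWave_le_one (L := L) hσ k
        (dyadicIndex k x) (Pi.single i (π / 2)) x)
      rw [stoppedGradient_succ]
      linear_combination h
    calc ∫ x, stoppedGradient L σ (k + 1) x i ^ 2 ∂uniformQsquare
        ≤ ∫ x, stoppedGradient L σ k x i ^ 2 + 2 * (stoppedCoeff L σ k (dyadicIndex k x) *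
            (stoppedGradient L σ k x i * cellWave (Pi.single i (π / 2)) k x)) + 1
            ∂uniformQsquare :=
          integral_mono (hsq _) (((hsq k).add hcross).add (integrable_const 1)) hexpand
      _ = ∫ x, stoppedGradient L σ k x i ^ 2 ∂uniformQsquare +
            2 * ∫ x, stoppedCoeff L σ k (dyadicIndex k x) *
              (stoppedGradient L σ k x i * cellWave (Pi.single i (π / 2)) k x) ∂uniformQsquare +
            1 := by
          rw [← integral_const_mul, ← integral_add (hsq k) hcross]
          refine (integral_add ((hsq k).add hcross) (integrable_const 1)).trans ?_
          rw [integral_const, probReal_univ, one_smul]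
          rfl
      _ ≤ (8 * π + 1) * ↑(k + 1) := by
          push_cast
          linarith [integral_stoppedCoeff_mul_le (L := L) hL hσ k i]

lemma sq_div_four_le_sum_stoppedGradient_sq (hL : 8 * π ≤ L) (hσ : ∀ k a, |σ k a| ≤ 1)
    (hfrozen : IsFrozen L σ k a) (hx : x ∈ dyadicCell k a) :
    L ^ 2 / 4 ≤ ∑ i, stoppedGradient L σ k x i ^ 2 := by
  obtain ⟨y, hy, i, hlt⟩ := hfrozen
  have hosc : |stoppedGradient L σ k y i - stoppedGradient L σ k x i| ≤ 4 * π :=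
    abs_stoppedGradient_sub_le hσ (hy.trans hx.symm) i
  have hhalf : L / 2 ≤ |stoppedGradient L σ k x i| := by
    linarith [abs_sub_abs_le_abs_sub (stoppedGradient L σ k y i) (stoppedGradient L σ k x i)]
  calc L ^ 2 / 4 = (L / 2) ^ 2 := by ring
    _ ≤ |stoppedGradient L σ k x i| ^ 2 := by
        gcongr
        linarith [pi_pos]
    _ = stoppedGradient L σ k x i ^ 2 := sq_abs _
    _ ≤ ∑ i, stoppedGradient L σ k x i ^ 2 :=
        Finset.single_le_sum (f := fun i ↦ stoppedGradient L σ k x i ^ 2)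
          (fun _ _ ↦ sq_nonneg _) (Finset.mem_univ i)

open Classical in
lemma card_filter_isFrozen_mul_sq_le (hL : 8 * π ≤ L) (hσ : ∀ k a, |σ k a| ≤ 1) (k : ℕ) :
    ((dyadicGrid k).filter (IsFrozen L σ k)).card * L ^ 2 ≤ 8 * (8 * π + 1) * k * 4 ^ k := by
  have hL₀ : 0 ≤ L := by linarith [pi_pos]
  have hsq (i : Fin 2) := (memLp_stoppedGradient hL₀ hσ k i 2).integrable_sq
  have hInt : Integrable (fun x ↦ ∑ i, stoppedGradient L σ k x i ^ 2) uniformQsquare :=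
    integrable_finsetSum _ fun i _ ↦ hsq i
  have hcell : ∀ a ∈ (dyadicGrid k).filter (IsFrozen L σ k), L ^ 2 / 4 * (4 ^ k)⁻¹ ≤
      ∫ x in dyadicCell k a, ∑ i, stoppedGradient L σ k x i ^ 2 ∂uniformQsquare := fun a ha ↦ by
    obtain ⟨ha, hfrozen⟩ := Finset.mem_filter.1 ha
    rw [← uniformQsquare_real_dyadicCell ha, mul_comm, ← smul_eq_mul, ← setIntegral_const]
    exact setIntegral_mono_on (integrable_const _) hInt.integrableOn
      (measurableSet_dyadicCell k a) fun x ↦ sq_div_four_le_sum_stoppedGradient_sq hL hσ hfrozen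
  have henergy : ((dyadicGrid k).filter (IsFrozen L σ k)).card * (L ^ 2 / 4 * (4 ^ k)⁻¹) ≤
      2 * ((8 * π + 1) * k) :=
    calc _ ≤ ∑ a ∈ (dyadicGrid k).filter (IsFrozen L σ k),
          ∫ x in dyadicCell k a, ∑ i, stoppedGradient L σ k x i ^ 2 ∂uniformQsquare := by
          rw [← nsmul_eq_mul]
          exact Finset.card_nsmul_le_sum _ _ _ hcell
      _ ≤ ∑ a ∈ dyadicGrid k,
          ∫ x in dyadicCell k a, ∑ i, stoppedGradient L σ k x i ^ 2 ∂uniformQsquare :=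
          Finset.sum_le_sum_of_subset_of_nonneg (Finset.filter_subset _ _) fun a _ _ ↦
            integral_nonneg fun x ↦ Finset.sum_nonneg fun i _ ↦ sq_nonneg _
      _ = ∑ i, ∫ x, stoppedGradient L σ k x i ^ 2 ∂uniformQsquare := by
          rw [← integral_eq_sum_setIntegral_dyadicCell k hInt, integral_finsetSum _ fun i _ ↦ hsq i]
      _ ≤ 2 * ((8 * π + 1) * k) := by
          rw [Fin.sum_univ_two, two_mul]
          exact add_le_add (integral_stoppedGradient_sq_le hL₀ hσ k 0)
            (integral_stoppedGradient_sq_le hL₀ hσ k 1)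
  field_simp at henergy
  linarith

end StoppedGradient

/-! ### The potential -/

/-- The sum of the bumps of the generations below `r` whose gradient is `stoppedGradient L σ r`. -/
def potential (L : ℝ) (σ : ℕ → (Fin 2 → ℤ) → ℝ) (r : ℕ) (x : Fin 2 → ℝ) : ℝ :=
  ∑ k ∈ Finset.range r,
    (2 ^ k)⁻¹ * (stoppedCoeff L σ k (dyadicIndex k x) * cellWave 0 k x)

section Potential

open Filter Topology

lemma continuous_floor_mul (c : ℤ → ℝ) {f : ℝ → ℝ} (hf : Continuous f) (hf₀ : ∀ m : ℤ, f m = 0) :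
    Continuous fun s ↦ c ⌊s⌋ * f s := by
  refine continuous_iff_continuousAt.2 fun x ↦ ?_
  have hleft : c (⌈x⌉ - 1) * f x = c ⌊x⌋ * f x := by
    by_cases hx : x ∈ Set.range ((↑) : ℤ → ℝ)
    · obtain ⟨m, rfl⟩ := hx
      rw [hf₀, mul_zero, mul_zero]
    · rw [(Int.ceil_eq_floor_add_one_iff_notMem x).2 hx, add_sub_cancel_right]
  rw [ContinuousAt, ← nhdsLT_sup_nhdsGE, tendsto_sup]
  constructor
  · rw [← hleft]
    refine ((hf.tendsto x).mono_left nhdsWithin_le_nhds).const_mul _ |>.congr' ?_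
    filter_upwards [tendsto_pure.1 (tendsto_floor_left_pure_ceil_sub_one x)] with s hs
    rw [hs]
  · refine ((hf.tendsto x).mono_left nhdsWithin_le_nhds).const_mul _ |>.congr' ?_
    filter_upwards [tendsto_pure.1 (tendsto_floor_right_pure_floor x)] with s hs
    rw [hs]

variable {L : ℝ} {σ : ℕ → (Fin 2 → ℤ) → ℝ} {x y : Fin 2 → ℝ}

lemma dyadicIndex_update (k : ℕ) (x : Fin 2 → ℝ) (i : Fin 2) (t : ℝ) :
    dyadicIndex k (Function.update x i t) =
      Function.update (dyadicIndex k x) i ⌊dyadicPos k t⌋ :=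
  Function.comp_update (fun t ↦ ⌊dyadicPos k t⌋) x i t

lemma continuous_potential_update (r : ℕ) (x : Fin 2 → ℝ) (i : Fin 2) :
    Continuous fun t ↦ potential L σ r (Function.update x i t) := by
  have hsin (m : ℤ) : sin (2 * π * m) = 0 := by
    simpa [mul_comm, mul_left_comm] using sin_int_mul_pi (2 * m)
  refine continuous_finsetSum _ fun k _ ↦ continuous_const.mul ?_
  simp only [dyadicIndex_update, cellWave_update, Pi.zero_apply, add_zero, ← mul_assoc]
  exact ((continuous_floor_mul (fun m ↦ stoppedCoeff L σ k (Function.update _ i m))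
    (f := fun s ↦ sin (2 * π * s)) (by fun_prop) hsin).comp (continuous_dyadicPos k)).mul_const _

lemma eventually_dyadicIndex_update_eq (k : ℕ) (x : Fin 2 → ℝ) (i : Fin 2) (t : ℝ) :
    ∀ᶠ s in 𝓝[≥] t,
      dyadicIndex k (Function.update x i s) = dyadicIndex k (Function.update x i t) := by
  have hpos : Tendsto (dyadicPos k) (𝓝[≥] t) (𝓝[≥] (dyadicPos k t)) :=
    (continuous_dyadicPos k).continuousWithinAt.tendsto_nhdsWithin
      fun _ hs ↦ (dyadicPos_strictMono k).monotone hs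
  filter_upwards [tendsto_pure.1 ((tendsto_floor_right_pure_floor _).comp hpos)] with s hs
  rw [dyadicIndex_update, dyadicIndex_update, ← hs, Function.comp_apply]

lemma hasDerivWithinAt_potential_update (r : ℕ) (x : Fin 2 → ℝ) (i : Fin 2) (t : ℝ) :
    HasDerivWithinAt (fun t ↦ potential L σ r (Function.update x i t))
      (stoppedGradient L σ r (Function.update x i t) i) (Set.Ici t) t := by
  rw [stoppedGradient_eq_sum]
  refine HasDerivWithinAt.fun_sum fun k _ ↦ ?_
  have hwave := ((hasDerivAt_cellWave_update 0 k x i t).const_mul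
    (stoppedCoeff L σ k (dyadicIndex k (Function.update x i t)))).const_mul (2 ^ k)⁻¹
  rw [zero_add, mul_left_comm _ (2 ^ k), inv_mul_cancel_left₀ (by positivity)] at hwave
  refine hwave.hasDerivWithinAt.congr_of_eventuallyEq ?_ rfl
  filter_upwards [eventually_dyadicIndex_update_eq k x i t] with s hs
  rw [hs]

lemma abs_potential_update_sub_le (hL : 0 ≤ L) (hσ : ∀ k a, |σ k a| ≤ 1) (r : ℕ) (x : Fin 2 → ℝ)
    (i : Fin 2) {s t : ℝ} (hst : s ≤ t) :
    |potential L σ r (Function.update x i t) - potential L σ r (Function.update x i s)| ≤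
      (L + 1) * (t - s) :=
  norm_image_sub_le_of_norm_deriv_right_le_segment
    (continuous_potential_update r x i).continuousOn
    (fun t _ ↦ hasDerivWithinAt_potential_update r x i t)
    (fun _ _ ↦ abs_stoppedGradient_le hL hσ r _ i) t (Set.right_mem_Icc.2 hst)

lemma potential_eq_zero (r : ℕ) {i : Fin 2} (hx : x i = -π ∨ x i = π) : potential L σ r x = 0 := by
  refine Finset.sum_eq_zero fun k _ ↦ ?_
  have hwave : cellWave 0 k x = 0 := by
    rcases hx with hx | hx
    · exact cellWave_zero_eq_zero (m := 0) (by rw [hx, dyadicPos_neg_pi, Int.cast_zero])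
    · exact cellWave_zero_eq_zero (m := 2 ^ k) (by rw [hx, dyadicPos_pi]; norm_cast)
  rw [hwave, mul_zero, mul_zero]

lemma rhoCircle_comm (s t : ℝ) : rhoCircle s t = rhoCircle t s := by
  rw [rhoCircle, rhoCircle, abs_sub_comm]

lemma abs_sub_le_mul_rhoCircle {g : ℝ → ℝ} {M : ℝ} (hM : 0 ≤ M)
    (hg : ∀ ⦃s t⦄, s ≤ t → |g t - g s| ≤ M * (t - s)) (hg_neg_pi : g (-π) = 0) (hg_pi : g π = 0)
    {s t : ℝ} (hs : s ∈ Set.Ioc (-π) π) (ht : t ∈ Set.Ioc (-π) π) :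
    |g s - g t| ≤ M * rhoCircle s t := by
  wlog hst : s ≤ t generalizing s t
  · rw [abs_sub_comm, rhoCircle_comm]
    exact this ht hs (le_of_not_ge hst)
  rw [rhoCircle, abs_sub_comm s, abs_of_nonneg (sub_nonneg.2 hst), mul_min_of_nonneg _ _ hM]
  refine le_min ((abs_sub_comm _ _).trans_le (hg hst)) ?_
  have hs₀ := hg hs.1.le
  have ht₀ := hg ht.2
  rw [hg_neg_pi, sub_zero] at hs₀
  rw [hg_pi, zero_sub, abs_neg] at ht₀
  linarith [abs_sub (g s) (g t)]

lemma abs_potential_sub_update_le (hL : 0 ≤ L) (hσ : ∀ k a, |σ k a| ≤ 1) (r : ℕ) (i : Fin 2)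
    {t : ℝ} (hx : x i ∈ Set.Ioc (-π) π) (ht : t ∈ Set.Ioc (-π) π) :
    |potential L σ r x - potential L σ r (Function.update x i t)| ≤
      (L + 1) * rhoCircle (x i) t := by
  have h := abs_sub_le_mul_rhoCircle (g := fun t ↦ potential L σ r (Function.update x i t))
    (by positivity) (fun s t ↦ abs_potential_update_sub_le hL hσ r x i)
    (potential_eq_zero r (.inl (Function.update_self ..)))
    (potential_eq_zero r (.inr (Function.update_self ..))) hx ht
  rwa [Function.update_eq_self] at h

lemma rhoCircle_le_rhoTorus (x y : Fin 2 → ℝ) (i : Fin 2) :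
    rhoCircle (x i) (y i) ≤ rhoTorus x y :=
  le_sqrt_of_sq_le <| Finset.single_le_sum (f := fun i ↦ rhoCircle (x i) (y i) ^ 2)
    (fun _ _ ↦ sq_nonneg _) (Finset.mem_univ i)

lemma potential_sub_le_mul_rhoTorus (hL : 0 ≤ L) (hσ : ∀ k a, |σ k a| ≤ 1) (r : ℕ)
    (hx : x ∈ Qsquare) (hy : y ∈ Qsquare) :
    potential L σ r x - potential L σ r y ≤ 2 * (L + 1) * rhoTorus x y := by
  have hpath : Function.update (Function.update x 0 (y 0)) 1 (y 1) = y := by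
    ext i
    fin_cases i <;> rfl
  have hfst := abs_potential_sub_update_le hL hσ r 0 (hx 0) (hy 0)
  have hsnd := abs_potential_sub_update_le (x := Function.update x 0 (y 0)) hL hσ r 1 (hx 1) (hy 1)
  rw [hpath, Function.update_of_ne one_ne_zero] at hsnd
  have htorus (i : Fin 2) : (L + 1) * rhoCircle (x i) (y i) ≤ (L + 1) * rhoTorus x y := by
    gcongr
    exact rhoCircle_le_rhoTorus x y i
  linarith [le_of_abs_le hfst, le_of_abs_le hsnd, htorus 0, htorus 1]

end Potential

/-! ### The gain of one generation -/

/-- The bump on the dyadic cell of generation `k` and index `a`, extended by zero. -/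
def cellBump (k : ℕ) (a : Fin 2 → ℤ) : (Fin 2 → ℝ) → ℝ := (dyadicCell k a).indicator (cellWave 0 k)

section CellBump

variable {k : ℕ} {a : Fin 2 → ℤ}

lemma measurable_cellBump (k : ℕ) (a : Fin 2 → ℤ) : Measurable (cellBump k a) :=
  (continuous_cellWave 0 k).measurable.indicator (measurableSet_dyadicCell k a)

lemma abs_cellBump_le_one (k : ℕ) (a : Fin 2 → ℤ) (x : Fin 2 → ℝ) : |cellBump k a x| ≤ 1 :=
  (norm_indicator_le_norm_self (cellWave 0 k) x).trans (abs_cellWave_le_one 0 k x)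

lemma memLp_cellBump (k : ℕ) (a : Fin 2 → ℤ) (p : ℝ≥0∞) :
    MemLp (cellBump k a) p uniformQsquare :=
  .of_bound (measurable_cellBump k a).aestronglyMeasurable 1 (.of_forall (abs_cellBump_le_one k a))

lemma variance_cellBump (ha : a ∈ dyadicGrid k) :
    Var[cellBump k a; uniformQsquare] = (4 ^ k)⁻¹ / 4 := by
  have hmean : ∫ x, cellBump k a x ∂uniformQsquare = 0 := by
    rw [cellBump, integral_indicator (measurableSet_dyadicCell k a), setIntegral_cellWave 0 ha]
  have hsq (x : Fin 2 → ℝ) :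
      cellBump k a x ^ 2 = (dyadicCell k a).indicator (fun x ↦ cellWave 0 k x ^ 2) x :=
    (congrFun (Set.indicator_comp_of_zero (g := fun z : ℝ ↦ z ^ 2) (zero_pow two_ne_zero)) x).symm
  rw [variance_of_integral_eq_zero (measurable_cellBump k a).aemeasurable hmean]
  simp only [hsq]
  rw [integral_indicator (measurableSet_dyadicCell k a), setIntegral_cellWave_sq 0 ha]

end CellBump

/-- The lower bound for `E|T| / (√n / 2 ^ k)`, where `T` is the discrepancy of a bump of generation
`k` between two samples of `n ≥ 4 ^ k` points. -/
def bumpConst : ℝ := 1 - exp (-(1 / π ^ 2))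

lemma bumpConst_pos : 0 < bumpConst :=
  sub_pos.2 (exp_lt_one_iff.2 (neg_neg_of_pos (by positivity)))

lemma bumpConst_le_one : bumpConst ≤ 1 := sub_le_self _ (exp_pos _).le

/-- A lower bound for the contribution of generation `k` to the discrepancy of the potential. A
frozen bump of discrepancy `T` loses at most `|T| ≤ T² / (2l) + l / 2`, where
`l = √n / (2 ^ k * bumpConst)`, and at most `bumpConst² / 2 * 4 ^ k` bumps are frozen. -/
def levelGain {n : ℕ} (k : ℕ) (x y : Fin n → Fin 2 → ℝ) : ℝ :=
  (2 ^ k)⁻¹ * ∑ a ∈ dyadicGrid k, (|discrepancy (cellBump k a) x y| -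
    bumpConst * 2 ^ k / (2 * √n) * discrepancy (cellBump k a) x y ^ 2) - bumpConst * √n / 4

section Expectation

variable {Ω : Type*} [MeasurableSpace Ω] {P : Measure Ω} {n k : ℕ} {a : Fin 2 → ℤ}
  {X Y : Fin n → Ω → Fin 2 → ℝ}

lemma integral_discrepancy_cellBump_sq (hind : iIndepFun (Sum.elim X Y) P)
    (hlaw : ∀ j, HasLaw (Sum.elim X Y j) uniformQsquare P) (ha : a ∈ dyadicGrid k) :
    ∫ ω, discrepancy (cellBump k a) (X · ω) (Y · ω) ^ 2 ∂P = n * (4 ^ k)⁻¹ / 2 := by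
  rw [integral_discrepancy_sq hind hlaw (measurable_cellBump k a) (memLp_cellBump k a 2),
    variance_cellBump ha, Fintype.card_fin]
  ring

lemma integrable_levelGain_term (hlaw : ∀ j, HasLaw (Sum.elim X Y j) uniformQsquare P)
    (k : ℕ) (a : Fin 2 → ℤ) :
    Integrable (fun ω ↦ |discrepancy (cellBump k a) (X · ω) (Y · ω)| -
      bumpConst * 2 ^ k / (2 * √n) * discrepancy (cellBump k a) (X · ω) (Y · ω) ^ 2) P :=
  (memLp_one_iff_integrable.1 (memLp_discrepancy hlaw (memLp_cellBump k a 1))).abs.sub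
    ((memLp_discrepancy hlaw (memLp_cellBump k a 2)).integrable_sq.const_mul _)

variable [IsProbabilityMeasure P]

lemma le_integral_abs_discrepancy_cellBump (hind : iIndepFun (Sum.elim X Y) P)
    (hlaw : ∀ j, HasLaw (Sum.elim X Y j) uniformQsquare P) (ha : a ∈ dyadicGrid k)
    (hk : 4 ^ k ≤ n) :
    √n / 2 ^ k * bumpConst ≤ ∫ ω, |discrepancy (cellBump k a) (X · ω) (Y · ω)| ∂P := by
  have hn : (0 : ℝ) < n := mod_cast (pow_pos four_pos k).trans_le hk
  have hscale : 2 ^ k / √n ≤ 1 := by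
    refine div_le_one_of_le₀ (le_sqrt_of_sq_le ?_) (sqrt_nonneg _)
    rw [← four_pow_eq_two_pow_sq]
    exact mod_cast hk
  have h := le_integral_abs_discrepancy hind hlaw (measurable_cellBump k a) (t := 2 ^ k / √n)
    (by positivity) fun x ↦
      (mul_le_one₀ hscale (abs_nonneg _) (abs_cellBump_le_one k a x)).trans one_le_pi_div_two
  have hexponent : 4 / π ^ 2 * (2 ^ k / √n) ^ 2 * n * ((4 ^ k)⁻¹ / 4) = 1 / π ^ 2 := by
    rw [div_pow, sq_sqrt hn.le, four_pow_eq_two_pow_sq]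
    field_simp
  rwa [variance_cellBump ha, Fintype.card_fin, inv_div, hexponent] at h

lemma integrable_levelGain (hlaw : ∀ j, HasLaw (Sum.elim X Y j) uniformQsquare P) (k : ℕ) :
    Integrable (fun ω ↦ levelGain k (X · ω) (Y · ω)) P :=
  ((integrable_finsetSum _ fun a _ ↦ integrable_levelGain_term hlaw k a).const_mul _).sub
    (integrable_const _)

lemma le_integral_levelGain_term (hind : iIndepFun (Sum.elim X Y) P)
    (hlaw : ∀ j, HasLaw (Sum.elim X Y j) uniformQsquare P) (ha : a ∈ dyadicGrid k)
    (hk : 4 ^ k ≤ n) :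
    3 / 4 * (√n / 2 ^ k * bumpConst) ≤ ∫ ω, (|discrepancy (cellBump k a) (X · ω) (Y · ω)| -
      bumpConst * 2 ^ k / (2 * √n) * discrepancy (cellBump k a) (X · ω) (Y · ω) ^ 2) ∂P := by
  have hn : (0 : ℝ) < n := mod_cast (pow_pos four_pos k).trans_le hk
  have hpenalty : bumpConst * 2 ^ k / (2 * √n) * (n * (4 ^ k)⁻¹ / 2) =
      1 / 4 * (√n / 2 ^ k * bumpConst) := by
    rw [four_pow_eq_two_pow_sq]
    nth_rw 2 [← sq_sqrt hn.le]
    field_simp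
    norm_num
  rw [integral_sub
    (memLp_one_iff_integrable.1 (memLp_discrepancy hlaw (memLp_cellBump k a 1))).abs
    ((memLp_discrepancy hlaw (memLp_cellBump k a 2)).integrable_sq.const_mul _),
    integral_const_mul, integral_discrepancy_cellBump_sq hind hlaw ha, hpenalty]
  linarith [le_integral_abs_discrepancy_cellBump hind hlaw ha hk]

lemma le_integral_levelGain (hind : iIndepFun (Sum.elim X Y) P)
    (hlaw : ∀ j, HasLaw (Sum.elim X Y j) uniformQsquare P) (hk : 4 ^ k ≤ n) :
    bumpConst * √n / 2 ≤ ∫ ω, levelGain k (X · ω) (Y · ω) ∂P := by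
  have hterms := Finset.card_nsmul_le_sum _ _ _ fun a ha ↦
    le_integral_levelGain_term (a := a) hind hlaw ha hk
  have hsum : 3 / 4 * (bumpConst * √n) = (2 ^ k)⁻¹ *
      ((dyadicGrid k).card • (3 / 4 * (√n / 2 ^ k * bumpConst))) := by
    rw [card_dyadicGrid, nsmul_eq_mul, Nat.cast_pow, Nat.cast_ofNat, four_pow_eq_two_pow_sq]
    field_simp
  simp only [levelGain]
  rw [integral_sub ((integrable_finsetSum _ fun a _ ↦
      integrable_levelGain_term hlaw k a).const_mul _) (integrable_const _), integral_const_mul,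
    integral_finsetSum _ fun a _ ↦ integrable_levelGain_term hlaw k a, integral_const,
    probReal_univ, one_smul]
  have hlevel := hsum.trans_le (mul_le_mul_of_nonneg_left hterms (by positivity))
  linarith

end Expectation

/-! ### The discrepancy of the potential -/

section Assembly

variable {L : ℝ} {σ : ℕ → (Fin 2 → ℤ) → ℝ} {k n r : ℕ}

lemma potential_eq_sum_cellBump (r : ℕ) {x : Fin 2 → ℝ}
    (hx : ∀ k, dyadicIndex k x ∈ dyadicGrid k) :
    potential L σ r x = ∑ k ∈ Finset.range r,
      (2 ^ k)⁻¹ * ∑ a ∈ dyadicGrid k, stoppedCoeff L σ k a * cellBump k a x := by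
  refine Finset.sum_congr rfl fun k _ ↦ congrArg _ ?_
  rw [Finset.sum_eq_single_of_mem _ (hx k) fun a _ ha ↦ ?_]
  · rw [cellBump, Set.indicator_of_mem (show x ∈ dyadicCell k (dyadicIndex k x) from rfl)]
  · have hxa : x ∉ dyadicCell k a := Ne.symm ha
    rw [cellBump, Set.indicator_of_notMem hxa, mul_zero]

lemma discrepancy_potential {ι : Type*} [Fintype ι] (r : ℕ) {x y : ι → Fin 2 → ℝ}
    (hx : ∀ i k, dyadicIndex k (x i) ∈ dyadicGrid k)
    (hy : ∀ i k, dyadicIndex k (y i) ∈ dyadicGrid k) :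
    discrepancy (potential L σ r) x y = ∑ k ∈ Finset.range r, (2 ^ k)⁻¹ *
      ∑ a ∈ dyadicGrid k, stoppedCoeff L σ k a * discrepancy (cellBump k a) x y := by
  simp only [discrepancy, potential_eq_sum_cellBump r (hx _), potential_eq_sum_cellBump r (hy _),
    ← Finset.sum_sub_distrib, ← mul_sub, Finset.mul_sum]
  rw [Finset.sum_comm]
  exact Finset.sum_congr rfl fun k _ ↦ Finset.sum_comm

lemma abs_sub_sq_div_le {l : ℝ} (hl : 0 < l) (t : ℝ) : |t| - t ^ 2 / (2 * l) ≤ l / 2 := by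
  have hsq : 0 ≤ (|t| - l) ^ 2 / (2 * l) := by positivity
  have hexpand : (|t| - l) ^ 2 / (2 * l) = t ^ 2 / (2 * l) - |t| + l / 2 := by
    rw [sub_sq, sq_abs]
    field_simp
  linarith

open Classical in
lemma sum_abs_sub_sq_div_le_sum_stoppedCoeff_mul {T : (Fin 2 → ℤ) → ℝ}
    (hσT : ∀ a, σ k a * T a = |T a|) {l : ℝ} (hl : 0 < l) (s : Finset (Fin 2 → ℤ)) :
    ∑ a ∈ s, (|T a| - T a ^ 2 / (2 * l)) - (s.filter (IsFrozen L σ k)).card * (l / 2) ≤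
      ∑ a ∈ s, stoppedCoeff L σ k a * T a := by
  rw [sub_le_iff_le_add, ← nsmul_eq_mul, ← Finset.sum_const, Finset.sum_filter,
    ← Finset.sum_add_distrib]
  refine Finset.sum_le_sum fun a _ ↦ ?_
  split_ifs with hfrozen
  · rw [stoppedCoeff_of_isFrozen hfrozen, zero_mul, zero_add]
    exact abs_sub_sq_div_le hl (T a)
  · rw [stoppedCoeff_of_not_isFrozen hfrozen, hσT, add_zero]
    exact sub_le_self _ (by positivity)

open Classical in
lemma card_filter_isFrozen_le (hL : 8 * π ≤ L) (hLr : 16 * (8 * π + 1) * r ≤ (bumpConst * L) ^ 2)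
    (hσ : ∀ k a, |σ k a| ≤ 1) (hkr : k < r) :
    ((dyadicGrid k).filter (IsFrozen L σ k)).card ≤ bumpConst ^ 2 / 2 * 4 ^ k := by
  have hL₀ : 0 < L := by linarith [pi_pos]
  refine le_of_mul_le_mul_right ?_ (pow_pos hL₀ 2)
  calc ((dyadicGrid k).filter (IsFrozen L σ k)).card * L ^ 2
      ≤ 8 * (8 * π + 1) * k * 4 ^ k := card_filter_isFrozen_mul_sq_le hL hσ k
    _ ≤ 8 * (8 * π + 1) * r * 4 ^ k := by gcongr
    _ ≤ (bumpConst * L) ^ 2 / 2 * 4 ^ k := by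
        gcongr
        linarith
    _ = bumpConst ^ 2 / 2 * 4 ^ k * L ^ 2 := by ring

/-- The sign of the discrepancy of the bump on the cell of generation `k` and index `a`. -/
def bumpSign (x y : Fin n → Fin 2 → ℝ) (k : ℕ) (a : Fin 2 → ℤ) : ℝ :=
  SignType.sign (discrepancy (cellBump k a) x y)

lemma abs_bumpSign_le_one (x y : Fin n → Fin 2 → ℝ) (k : ℕ) (a : Fin 2 → ℤ) :
    |bumpSign x y k a| ≤ 1 := by
  rw [bumpSign]
  cases SignType.sign (discrepancy (cellBump k a) x y) <;> simp

lemma levelGain_le (hL : 8 * π ≤ L) (hLr : 16 * (8 * π + 1) * r ≤ (bumpConst * L) ^ 2)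
    (hkr : k < r) (hn : n ≠ 0) (x y : Fin n → Fin 2 → ℝ) :
    levelGain k x y ≤ (2 ^ k)⁻¹ * ∑ a ∈ dyadicGrid k,
      stoppedCoeff L (bumpSign x y) k a * discrepancy (cellBump k a) x y := by
  classical
  have hc := bumpConst_pos
  set l := √n / (2 ^ k * bumpConst) with hl
  have hl₀ : 0 < l := by positivity
  have hcard := mul_le_mul_of_nonneg_right
    (card_filter_isFrozen_le hL hLr (abs_bumpSign_le_one x y) hkr) (half_pos hl₀).le
  have hsum := sum_abs_sub_sq_div_le_sum_stoppedCoeff_mul (L := L) (k := k) (σ := bumpSign x y)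
    (fun a ↦ sign_mul_self (discrepancy (cellBump k a) x y)) hl₀ (dyadicGrid k)
  have hpenalty (t : ℝ) : bumpConst * 2 ^ k / (2 * √n) * t = t / (2 * l) := by
    rw [hl]
    field_simp
  have hloss : bumpConst * √n / 4 = (2 ^ k)⁻¹ * (bumpConst ^ 2 / 2 * 4 ^ k * (l / 2)) := by
    rw [hl, four_pow_eq_two_pow_sq]
    field_simp
    norm_num
  simp only [levelGain, hpenalty]
  rw [hloss, ← mul_sub]
  gcongr
  linarith

lemma sum_levelGain_le_discrepancy_potential (hL : 8 * π ≤ L)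
    (hLr : 16 * (8 * π + 1) * r ≤ (bumpConst * L) ^ 2) (hn : n ≠ 0) {x y : Fin n → Fin 2 → ℝ}
    (hx : ∀ i k, dyadicIndex k (x i) ∈ dyadicGrid k)
    (hy : ∀ i k, dyadicIndex k (y i) ∈ dyadicGrid k) :
    ∑ k ∈ Finset.range r, levelGain k x y ≤ discrepancy (potential L (bumpSign x y) r) x y := by
  rw [discrepancy_potential r hx hy]
  exact Finset.sum_le_sum fun k hk ↦ levelGain_le hL hLr (Finset.mem_range.1 hk) hn x y

variable {Ω : Type*} [MeasurableSpace Ω] {P : Measure Ω} {X Y : Fin n → Ω → Fin 2 → ℝ}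

lemma ae_ofReal_sum_levelGain_le_W1tilde (hL : 8 * π ≤ L)
    (hLr : 16 * (8 * π + 1) * r ≤ (bumpConst * L) ^ 2) (hn : n ≠ 0)
    (hlaw : ∀ j, HasLaw (Sum.elim X Y j) uniformQsquare P) :
    ∀ᵐ ω ∂P, ENNReal.ofReal
        ((n * (2 * (L + 1)))⁻¹ * ∑ k ∈ Finset.range r, levelGain k (X · ω) (Y · ω)) ≤
      W1tilde (empMeasure X ω) (empMeasure Y ω) := by
  have hL₀ : 0 ≤ L := by linarith [pi_pos]
  have hsample (j : Fin n ⊕ Fin n) : ∀ᵐ ω ∂P, Sum.elim X Y j ω ∈ Qsquare ∧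
      ∀ k, dyadicIndex k (Sum.elim X Y j ω) ∈ dyadicGrid k := by
    refine ae_of_ae_map (p := fun x ↦ x ∈ Qsquare ∧ ∀ k, dyadicIndex k x ∈ dyadicGrid k)
      (hlaw j).aemeasurable ?_
    rw [(hlaw j).map_eq]
    filter_upwards [ae_uniformQsquare_mem_Ioo, ae_uniformQsquare_dyadicIndex_mem_dyadicGrid]
      with x hx hgrid using ⟨fun i ↦ Set.Ioo_subset_Ioc_self (hx i), hgrid⟩
  filter_upwards [ae_all_iff.2 hsample] with ω hω
  refine le_trans (ENNReal.ofReal_le_ofReal ?_) (ofReal_discrepancy_le_W1tilde hn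
    (fun i ↦ (hω (.inl i)).1) (fun i ↦ (hω (.inr i)).1) (M := 2 * (L + 1)) (by positivity)
    fun x hx y hy ↦ potential_sub_le_mul_rhoTorus hL₀ (abs_bumpSign_le_one (X · ω) (Y · ω)) r hx hy)
  gcongr
  exact sum_levelGain_le_discrepancy_potential hL hLr hn (fun i ↦ (hω (.inl i)).2)
    fun i ↦ (hω (.inr i)).2

lemma ofReal_le_lintegral_W1tilde [IsProbabilityMeasure P] (hL : 8 * π ≤ L)
    (hLr : 16 * (8 * π + 1) * r ≤ (bumpConst * L) ^ 2) (hn : n ≠ 0) (hrn : ∀ k < r, 4 ^ k ≤ n)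
    (hind : iIndepFun (Sum.elim X Y) P)
    (hlaw : ∀ j, HasLaw (Sum.elim X Y j) uniformQsquare P) :
    ENNReal.ofReal ((n * (2 * (L + 1)))⁻¹ * (r * (bumpConst * √n / 2))) ≤
      ∫⁻ ω, W1tilde (empMeasure X ω) (empMeasure Y ω) ∂P := by
  have hL₀ : 0 ≤ L := by linarith [pi_pos]
  have hgain : r * (bumpConst * √n / 2) ≤
      ∫ ω, ∑ k ∈ Finset.range r, levelGain k (X · ω) (Y · ω) ∂P := by
    rw [integral_finsetSum _ fun k _ ↦ integrable_levelGain hlaw k]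
    simpa using Finset.card_nsmul_le_sum (Finset.range r) _ _ fun k hk ↦
      le_integral_levelGain hind hlaw (hrn k (Finset.mem_range.1 hk))
  calc ENNReal.ofReal ((n * (2 * (L + 1)))⁻¹ * (r * (bumpConst * √n / 2)))
      ≤ ENNReal.ofReal (∫ ω, (n * (2 * (L + 1)))⁻¹ *
          ∑ k ∈ Finset.range r, levelGain k (X · ω) (Y · ω) ∂P) := by
        rw [integral_const_mul]
        gcongr
    _ ≤ ∫⁻ ω, ENNReal.ofReal ((n * (2 * (L + 1)))⁻¹ *
          ∑ k ∈ Finset.range r, levelGain k (X · ω) (Y · ω)) ∂P :=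
        ofReal_integral_le_lintegral_ofReal
          ((integrable_finsetSum _ fun k _ ↦ integrable_levelGain hlaw k).const_mul _)
    _ ≤ ∫⁻ ω, W1tilde (empMeasure X ω) (empMeasure Y ω) ∂P :=
        lintegral_mono_ae (ae_ofReal_sum_levelGain_le_W1tilde hL hLr hn hlaw)

end Assembly

lemma log_le_four_mul_log_four_add_one {n : ℕ} (hn : n ≠ 0) :
    Real.log n ≤ 4 * (Nat.log 4 n + 1 : ℕ) := by
  have hpow : (n : ℝ) ≤ 4 ^ (Nat.log 4 n + 1) :=
    mod_cast (Nat.lt_pow_succ_log_self (by norm_num) n).le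
  calc Real.log n ≤ (Nat.log 4 n + 1 : ℕ) * Real.log 4 := by
        rw [← Real.log_pow]
        exact Real.log_le_log (by positivity) hpow
    _ ≤ (Nat.log 4 n + 1 : ℕ) * 4 := by
        gcongr
        exact log_le_self (by norm_num)
    _ = 4 * (Nat.log 4 n + 1 : ℕ) := mul_comm _ _

lemma mul_sqrt_log_div_le {n r : ℕ} {A c : ℝ} (hn : n ≠ 0) (hr : 1 ≤ r) (hA : 0 < A) (hc : 0 < c)
    (hlog : Real.log n ≤ 4 * r) :
    c / (8 * (A + 1)) * √(Real.log n / n) ≤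
      (n * (2 * (A * √r + 1)))⁻¹ * (r * (c * √n / 2)) := by
  have hn₀ : (0 : ℝ) < n := by positivity
  have hr₁ : 1 ≤ √(r : ℝ) := one_le_sqrt.2 (mod_cast hr)
  have hsqrt : √(Real.log n / n) ≤ 2 * √r / √n := by
    rw [sqrt_le_left (by positivity), div_pow, mul_pow, sq_sqrt hn₀.le, sq_sqrt (by positivity)]
    gcongr
    linarith
  calc c / (8 * (A + 1)) * √(Real.log n / n) ≤ c / (8 * (A + 1)) * (2 * √r / √n) := by gcongr
    _ = (√n ^ 2 * (2 * ((A + 1) * √r)))⁻¹ * (√r ^ 2 * (c * √n / 2)) := by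
        field_simp
        norm_num
    _ = (n * (2 * (A * √r + √r)))⁻¹ * (r * (c * √n / 2)) := by
        rw [sq_sqrt hn₀.le, sq_sqrt (by positivity), add_one_mul]
    _ ≤ (n * (2 * (A * √r + 1)))⁻¹ * (r * (c * √n / 2)) := by gcongr

/-- The AKT lower bound in dimension `2`: for independent samples uniform on the
torus `Q²`, the expected Kantorovich distance between the two empirical measures
is at least of the order `√(log n / n)`. -/
theorem AKT_lower_bound_torus :
    ∃ c : ℝ, 0 < c ∧
      ∀ (n : ℕ), 2 ≤ n →
      ∀ (Ω : Type) (_ : MeasurableSpace Ω) (P : Measure Ω), IsProbabilityMeasure P →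
      ∀ (X Y : Fin n → Ω → (Fin 2 → ℝ)),
        iIndepFun (Sum.elim X Y) P →
        (∀ k, P.map (X k) = uniformQsquare) →
        (∀ k, P.map (Y k) = uniformQsquare) →
        ENNReal.ofReal (c * Real.sqrt (Real.log n / n))
          ≤ ∫⁻ ω, W1tilde (empMeasure X ω) (empMeasure Y ω) ∂P := by
  have hc := bumpConst_pos
  refine ⟨bumpConst / (8 * (32 * π / bumpConst + 1)), by positivity, ?_⟩
  intro n hn Ω _ P _ X Y hind hX hY
  have hn₀ : n ≠ 0 := by lia
  have hmap : ∀ j, P.map (Sum.elim X Y j) = uniformQsquare := Sum.rec hX hY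
  have hlaw (j : Fin n ⊕ Fin n) : HasLaw (Sum.elim X Y j) uniformQsquare P :=
    ⟨.of_map_ne_zero (hmap j ▸ IsProbabilityMeasure.ne_zero _), hmap j⟩
  set r := Nat.log 4 n + 1
  have hr : 1 ≤ √(r : ℝ) := one_le_sqrt.2 (mod_cast Nat.le_add_left 1 _)
  have hrn (k : ℕ) (hk : k < r) : 4 ^ k ≤ n := Nat.pow_le_of_le_log hn₀ (Nat.lt_succ_iff.1 hk)
  have hL : 8 * π ≤ 32 * π / bumpConst * √r := by
    have hA : 8 * π ≤ 32 * π / bumpConst := by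
      rw [le_div_iff₀ hc]
      nlinarith [pi_pos, bumpConst_le_one]
    exact hA.trans (le_mul_of_one_le_right (by positivity) hr)
  have hLr : 16 * (8 * π + 1) * r ≤ (bumpConst * (32 * π / bumpConst * √r)) ^ 2 := by
    rw [← mul_assoc, mul_div_cancel₀ _ hc.ne', mul_pow, sq_sqrt (by positivity)]
    gcongr
    nlinarith [pi_gt_three]
  exact (ENNReal.ofReal_le_ofReal (mul_sqrt_log_div_le hn₀ (Nat.le_add_left 1 _) (by positivity) hc
    (log_le_four_mul_log_four_add_one hn₀))).trans
      (ofReal_le_lintegral_W1tilde hL hLr hn₀ hrn hind hlaw)
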